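/- Let ℓ, m, n be positive integers, w ∈ S_{m,ℓ} and v ∈ S_{n,ℓ}. Then the length (number of inversions) of the permutation (w ⊞ 1_n)·(1_m ⊞ v) of {1,…,m+n+ℓ} equals ℓ(w) + ℓ(v), the sum of the numbers of inversions of w and of v. -/

import Mathlib

/-- `u` is a minimal-length left coset representative in `S_{m,ℓ}`:
a permutation of `{1,…,m+ℓ}` (encoded `0`-indexed as `Fin (m + l)`) that is
strictly increasing on the first `m` values and on the last `l` values. -/
def IsMinRep (m l : ℕ) (u : Equiv.Perm (Fin (m + l))) : Prop :=
  (∀ i j : Fin (m + l), i < j → (j : ℕ) < m → u i < u j) ∧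
  (∀ i j : Fin (m + l), i < j → m ≤ (i : ℕ) → u i < u j)

/-- Transport a permutation of `Fin a` to a permutation of `Fin b` along `a = b`. -/
def permCast {a b : ℕ} (h : a = b) (u : Equiv.Perm (Fin a)) : Equiv.Perm (Fin b) :=
  Equiv.permCongr (finCongr h) u

/-- The concatenation `u ⊞ v` of permutations: it acts as `u` on the first `p`
values and as (the shift by `p` of) `v` on the last `q` values. -/
def boxplus {p q : ℕ} (u : Equiv.Perm (Fin p)) (v : Equiv.Perm (Fin q)) :
    Equiv.Perm (Fin (p + q)) :=
  Equiv.permCongr finSumFinEquiv (Equiv.sumCongr u v)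

/-- `w ⊞ 1_n`, viewed as a permutation of `{1,…,m+n+ℓ}`. -/
def bpFirst (m l n : ℕ) (w : Equiv.Perm (Fin (m + l))) : Equiv.Perm (Fin (m + n + l)) :=
  permCast (by omega) (boxplus w (1 : Equiv.Perm (Fin n)))

/-- `1_m ⊞ v`, viewed as a permutation of `{1,…,m+n+ℓ}`. -/
def bpSecond (m l n : ℕ) (v : Equiv.Perm (Fin (n + l))) : Equiv.Perm (Fin (m + n + l)) :=
  permCast (by omega) (boxplus (1 : Equiv.Perm (Fin m)) v)

/-- The number of inversions (the length) of a permutation. -/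
def invCount {N : ℕ} (u : Equiv.Perm (Fin N)) : ℕ :=
  (Finset.univ.filter (fun p : Fin N × Fin N => p.1 < p.2 ∧ u p.2 < u p.1)).card

/-- One step of the Bruhat order: `x = t·u` for a transposition `t`, with
`ℓ(u) < ℓ(x)`. -/
def BruhatStep {N : ℕ} (u x : Equiv.Perm (Fin N)) : Prop :=
  (∃ a b : Fin N, a ≠ b ∧ x = Equiv.swap a b * u) ∧ invCount u < invCount x

/-- The Bruhat order on the symmetric group: the order generated by
`u < t·u` whenever `t` is a transposition and `ℓ(u) < ℓ(t·u)`. -/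
def BruhatLE {N : ℕ} (u x : Equiv.Perm (Fin N)) : Prop :=
  Relation.ReflTransGen BruhatStep u x

/-- The permutation `w[n,ℓ]` of `{1,…,n+ℓ}` sending `k ↦ k + ℓ` for `k ≤ n`
and `k ↦ k - n` for `n < k`. -/
def wshift (n l : ℕ) : Equiv.Perm (Fin (n + l)) :=
  finSumFinEquiv.symm.trans ((Equiv.sumComm (Fin n) (Fin l)).trans
    (finSumFinEquiv.trans (finCongr (by omega))))

theorem invCount_permCast {a b : ℕ} (h : a = b) (u : Equiv.Perm (Fin a)) :
    invCount (permCast h u) = invCount u := by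
  subst h
  rfl

theorem invCount_one (N : ℕ) : invCount (1 : Equiv.Perm (Fin N)) = 0 := by
  simp only [invCount, Finset.card_eq_zero, Finset.filter_eq_empty_iff]
  rintro p - ⟨h₁, h₂⟩
  exact absurd h₁ (not_lt_of_gt h₂)

theorem boxplus_castAdd {p q : ℕ} (u : Equiv.Perm (Fin p)) (v : Equiv.Perm (Fin q)) (i : Fin p) :
    boxplus u v (Fin.castAdd q i) = Fin.castAdd q (u i) := by
  simp [boxplus, Equiv.permCongr_apply]

theorem boxplus_natAdd {p q : ℕ} (u : Equiv.Perm (Fin p)) (v : Equiv.Perm (Fin q)) (i : Fin q) :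
    boxplus u v (Fin.natAdd p i) = Fin.natAdd p (v i) := by
  simp [boxplus, Equiv.permCongr_apply]

theorem invCount_eq_sum {N : ℕ} (u : Equiv.Perm (Fin N)) :
    invCount u = ∑ i, ∑ j, if i < j ∧ u j < u i then 1 else 0 := by
  rw [invCount, Finset.card_filter, Fintype.sum_prod_type]

theorem invCount_boxplus {p q : ℕ} (u : Equiv.Perm (Fin p)) (v : Equiv.Perm (Fin q)) :
    invCount (boxplus u v) = invCount u + invCount v := by
  have hlt (i : Fin p) (j : Fin q) : ¬ Fin.natAdd p j < Fin.castAdd q i := by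
    simp only [Fin.lt_def, Fin.val_natAdd, Fin.val_castAdd]
    omega
  have hl (i j : Fin p) : Fin.castAdd q i < Fin.castAdd q j ↔ i < j := Iff.rfl
  simp only [invCount_eq_sum, Fin.sum_univ_add, boxplus_castAdd, boxplus_natAdd, hlt, hl,
    Fin.natAdd_lt_natAdd_iff, and_false, false_and, if_false, Finset.sum_const_zero, add_zero,
    zero_add]

/-- Lengths add in a product `a * b` as soon as `a` preserves the order of every pair of values
inverted by `b`. -/
theorem invCount_mul {N : ℕ} (a b : Equiv.Perm (Fin N))
    (h : ∀ i j, i < j → b j < b i → a (b j) < a (b i)) :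
    invCount (a * b) = invCount a + invCount b := by
  have ha : invCount a = ∑ i, ∑ j, if b i < b j ∧ a (b j) < a (b i) then 1 else 0 := by
    rw [invCount_eq_sum, ← Equiv.sum_comp b]
    exact Finset.sum_congr rfl fun i _ => (Equiv.sum_comp b _).symm
  rw [ha, invCount_eq_sum b, invCount_eq_sum (a * b), ← Finset.sum_add_distrib]
  refine Finset.sum_congr rfl fun i _ => ?_
  rw [← Finset.sum_add_distrib]
  refine Finset.sum_congr rfl fun j _ => ?_
  rw [Equiv.Perm.mul_apply, Equiv.Perm.mul_apply]
  have h₁ := h i j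
  have h₂ := h j i
  have hb : b i = b j → i = j := fun e => b.injective e
  grind

/-- The values inverted by `1 ⊞ v` lie in the second block. -/
theorem le_of_boxplus_one_inversion {p q : ℕ} (v : Equiv.Perm (Fin q)) {i j : Fin (p + q)}
    (hij : i < j) (h : boxplus 1 v j < boxplus 1 v i) : p ≤ (boxplus 1 v j : ℕ) := by
  induction j using Fin.addCases with
  | right j => simp [boxplus_natAdd]
  | left j =>
    induction i using Fin.addCases with
    | left i =>
      simp only [boxplus_castAdd, Equiv.Perm.one_apply] at h
      exact absurd h (not_lt_of_gt hij)
    | right i =>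
      simp only [Fin.lt_def, Fin.val_natAdd, Fin.val_castAdd] at hij
      omega

/-- If `u` is strictly increasing from position `k` on, then so is `u ⊞ 1`. -/
theorem boxplus_one_lt {p q k : ℕ} (u : Equiv.Perm (Fin p))
    (hu : ∀ i j : Fin p, i < j → k ≤ (i : ℕ) → u i < u j) {i j : Fin (p + q)}
    (hij : i < j) (hi : k ≤ (i : ℕ)) : boxplus u 1 i < boxplus u 1 j := by
  induction i using Fin.addCases with
  | left i =>
    induction j using Fin.addCases with
    | left j =>
      rw [boxplus_castAdd, boxplus_castAdd]
      exact hu i j hij hi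
    | right j =>
      simp only [boxplus_castAdd, boxplus_natAdd, Fin.lt_def, Fin.val_natAdd, Fin.val_castAdd]
      omega
  | right i =>
    induction j using Fin.addCases with
    | left j =>
      simp only [Fin.lt_def, Fin.val_natAdd, Fin.val_castAdd] at hij
      omega
    | right j => simpa [boxplus_natAdd] using hij

/-- For `w ∈ S_{m,ℓ}` and `v ∈ S_{n,ℓ}`, the length of `(w ⊞ 1_n)·(1_m ⊞ v)`
equals `ℓ(w) + ℓ(v)`. -/
theorem length_bp_mul_bp (l m n : ℕ) (hl : 0 < l) (hm : 0 < m) (hn : 0 < n)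
    (w : Equiv.Perm (Fin (m + l))) (hw : IsMinRep m l w)
    (v : Equiv.Perm (Fin (n + l))) (hv : IsMinRep n l v) :
    invCount (bpFirst m l n w * bpSecond m l n v) = invCount w + invCount v := by
  rw [invCount_mul]
  · simp only [bpFirst, bpSecond, invCount_permCast, invCount_boxplus, invCount_one, add_zero,
      zero_add]
  · intro i j hij h
    exact boxplus_one_lt w hw.2 h (le_of_boxplus_one_inversion v hij h)
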